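/- For all smooth functions f, g : ℝ³ → ℝ one has [X_f, X_g] = X_{{f,g}}, where {f,g} is the Lagrange bracket. Consequently, the Lagrange bracket makes C^∞(ℝ³) into a Lie algebra and f ↦ X_f is a Lie algebra isomorphism from (C^∞(ℝ³), {·,·}) onto the Lie algebra of contact vector fields on ℝ³. -/

import Mathlib

noncomputable section

/-- The 1-jet space `J¹(ℝ,ℝ) = ℝ³` with coordinates `(x, y, z)`. -/
abbrev R3 : Type := ℝ × ℝ × ℝ

/-- The plane `ℝ²` with coordinates `(x, y)`. -/
abbrev R2 : Type := ℝ × ℝ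

/-- Partial derivative in `x` of a function on `ℝ³`. -/
noncomputable def px (f : R3 → ℝ) (p : R3) : ℝ := fderiv ℝ f p (1, 0, 0)

/-- Partial derivative in `y` of a function on `ℝ³`. -/
noncomputable def py (f : R3 → ℝ) (p : R3) : ℝ := fderiv ℝ f p (0, 1, 0)

/-- Partial derivative in `z` of a function on `ℝ³`. -/
noncomputable def pz (f : R3 → ℝ) (p : R3) : ℝ := fderiv ℝ f p (0, 0, 1)

/-- The contact form `ω = dy − z dx` evaluated on a vector field `X`:
`ω(X)(x,y,z) = X² − z·X¹`. -/
def omega1 (X : R3 → R3) (p : R3) : ℝ := (X p).2.1 - p.2.2 * (X p).1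

/-- Lie bracket of vector fields on `ℝ³`: `[X,Y] = (DY)X − (DX)Y`. -/
noncomputable def vbr (X Y : R3 → R3) : R3 → R3 := fun p =>
  fderiv ℝ Y p (X p) - fderiv ℝ X p (Y p)

/-- The contact vector field with characteristic function `f`:
`X_f = (−f_z, f − z f_z, f_x + z f_y)`. -/
noncomputable def Xf (f : R3 → ℝ) : R3 → R3 := fun p =>
  (-(pz f p), f p - p.2.2 * pz f p, px f p + p.2.2 * py f p)

/-- A vector field `X` on `ℝ³` is contact if it is smooth and `L_X ω = λ·ω` for some
smooth function `λ`; the Lie derivative of the 1-form `ω` is expressed through its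
action on arbitrary smooth vector fields: `(L_X ω)(Y) = X(ω(Y)) − ω([X,Y])`. -/
def IsContactVF (X : R3 → R3) : Prop :=
  ContDiff ℝ (⊤ : ℕ∞) X ∧ ∃ lam : R3 → ℝ, ContDiff ℝ (⊤ : ℕ∞) lam ∧
    ∀ Y : R3 → R3, ContDiff ℝ (⊤ : ℕ∞) Y → ∀ p : R3,
      fderiv ℝ (fun q => omega1 Y q) p (X p) - omega1 (vbr X Y) p = lam p * omega1 Y p

/-- The Lagrange bracket
`{f,g} = f_x g_z − f_z g_x + z(f_y g_z − f_z g_y) + f g_y − g f_y`. -/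
noncomputable def lagr (f g : R3 → ℝ) (p : R3) : ℝ :=
  px f p * pz g p - pz f p * px g p
    + p.2.2 * (py f p * pz g p - pz f p * py g p)
    + f p * py g p - g p * py f p

/-!
A contact vector field `X` is determined by the function `ω(X)`: Cartan's formula
`L_X ω = d(ω(X)) + dω(X, ·)` with `dω = dx ∧ dz` turns `L_X ω = λ ω` into three equations which say
that `X = X_f` for `f = ω(X)`, and conversely `L_{X_f} ω = f_y ω`. Since `L_{[X,Y]} = [L_X, L_Y]`,
contact vector fields are closed under the Lie bracket, so `[X_f, X_g]` is the contact field of the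
function `ω([X_f, X_g]) = X_f(g) - (L_{X_f} ω)(X_g) = X_f(g) - f_y g = {f,g}`. The Jacobi identity
for `{·,·}` is that of vector fields, read through `ω`.
-/

open VectorField
open scoped ContDiff

section VectorFieldsAndForms

variable {𝕜 E F : Type*} [NontriviallyNormedField 𝕜] [NormedAddCommGroup E] [NormedSpace 𝕜 E]
  [NormedAddCommGroup F] [NormedSpace 𝕜 F] {X Y Z : E → E} {α : E → E →L[𝕜] F} {x : E}

theorem lieBracket_jacobi {n : ℕ∞ω} (hn : minSmoothness 𝕜 2 ≤ n) (hX : ContDiffAt 𝕜 n X x)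
    (hY : ContDiffAt 𝕜 n Y x) (hZ : ContDiffAt 𝕜 n Z x) :
    lieBracket 𝕜 X (lieBracket 𝕜 Y Z) x + lieBracket 𝕜 Y (lieBracket 𝕜 Z X) x
      + lieBracket 𝕜 Z (lieBracket 𝕜 X Y) x = 0 := by
  have hZX : lieBracket 𝕜 Y (lieBracket 𝕜 Z X) x = -lieBracket 𝕜 Y (lieBracket 𝕜 X Z) x := by
    rw [show lieBracket 𝕜 Z X = -lieBracket 𝕜 X Z from funext fun _ => lieBracket_swap]
    simp only [lieBracket, fderiv_neg, Pi.neg_apply, neg_apply, map_neg]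
    abel
  rw [leibniz_identity_lieBracket hn hX hY hZ, hZX, lieBracket_swap (V := Z)]
  abel

theorem fderiv_lieBracket_apply (hX : ContDiffAt 𝕜 2 X x) (hY : ContDiffAt 𝕜 2 Y x) (v : E) :
    fderiv 𝕜 (lieBracket 𝕜 X Y) x v =
      fderiv 𝕜 Y x (fderiv 𝕜 X x v) + fderiv 𝕜 (fderiv 𝕜 Y) x v (X x)
        - (fderiv 𝕜 X x (fderiv 𝕜 Y x v) + fderiv 𝕜 (fderiv 𝕜 X) x v (Y x)) := by
  have hX₁ := hX.differentiableAt two_ne_zero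
  have hY₁ := hY.differentiableAt two_ne_zero
  have hDX := (hX.fderiv_right (m := 1) le_rfl).differentiableAt one_ne_zero
  have hDY := (hY.fderiv_right (m := 1) le_rfl).differentiableAt one_ne_zero
  rw [lieBracket_eq, fderiv_fun_sub (hDY.clm_apply hX₁) (hDX.clm_apply hY₁),
    fderiv_clm_apply hDY hX₁, fderiv_clm_apply hDX hY₁]
  simp

variable (𝕜) in
/-- The Lie derivative `L_X α` of a (vector-valued) one-form `α` along a vector field `X` on a
normed space, used to express that a vector field preserves the contact distribution. It is encoded
by its value `Dα(X) + α ∘ DX`, so that it is again a one-form; compare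
`lieDerivOneForm_apply_vectorField`. -/
def lieDerivOneForm (X : E → E) (α : E → E →L[𝕜] F) (x : E) : E →L[𝕜] F :=
  fderiv 𝕜 α x (X x) + α x ∘L fderiv 𝕜 X x

theorem lieDerivOneForm_apply_vectorField (hα : DifferentiableAt 𝕜 α x)
    (hZ : DifferentiableAt 𝕜 Z x) :
    lieDerivOneForm 𝕜 X α x (Z x) =
      fderiv 𝕜 (fun y => α y (Z y)) x (X x) - α x (lieBracket 𝕜 X Z x) := by
  simp [lieDerivOneForm, lieBracket, fderiv_clm_apply hα hZ]

theorem lieDerivOneForm_smul {f : E → 𝕜} (hf : DifferentiableAt 𝕜 f x)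
    (hα : DifferentiableAt 𝕜 α x) :
    lieDerivOneForm 𝕜 X (fun y => f y • α y) x =
      fderiv 𝕜 f x (X x) • α x + f x • lieDerivOneForm 𝕜 X α x := by
  ext v
  simp only [lieDerivOneForm, fderiv_fun_smul hf hα, add_apply, smul_apply,
    ContinuousLinearMap.smulRight_apply, ContinuousLinearMap.comp_apply, smul_add]
  abel

theorem fderiv_lieDerivOneForm_apply (hX : ContDiffAt 𝕜 2 X x) (hα : ContDiffAt 𝕜 2 α x)
    (v w : E) :
    fderiv 𝕜 (lieDerivOneForm 𝕜 X α) x w v =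
      fderiv 𝕜 (fun y => fderiv 𝕜 α y (X y)) x w v
        + (α x (fderiv 𝕜 (fderiv 𝕜 X) x w v) + fderiv 𝕜 α x w (fderiv 𝕜 X x v)) := by
  have hX₁ := hX.differentiableAt two_ne_zero
  have hα₁ := hα.differentiableAt two_ne_zero
  have hDX := (hX.fderiv_right (m := 1) le_rfl).differentiableAt one_ne_zero
  have hDα := (hα.fderiv_right (m := 1) le_rfl).differentiableAt one_ne_zero
  have hsum : fderiv 𝕜 (lieDerivOneForm 𝕜 X α) x = _ :=
    fderiv_fun_add (hDα.clm_apply hX₁) (hα₁.clm_comp hDX)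
  rw [hsum, fderiv_clm_comp hα₁ hDX]
  simp

theorem lieDerivOneForm_lieBracket {n : ℕ∞ω} (hn : minSmoothness 𝕜 2 ≤ n)
    (hX : ContDiffAt 𝕜 n X x) (hY : ContDiffAt 𝕜 n Y x) (hα : ContDiffAt 𝕜 n α x) :
    lieDerivOneForm 𝕜 (lieBracket 𝕜 X Y) α x =
      lieDerivOneForm 𝕜 X (lieDerivOneForm 𝕜 Y α) x
        - lieDerivOneForm 𝕜 Y (lieDerivOneForm 𝕜 X α) x := by
  have hn₂ : 2 ≤ n := le_minSmoothness.trans hn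
  have hX₂ := hX.of_le hn₂
  have hY₂ := hY.of_le hn₂
  have hα₂ := hα.of_le hn₂
  have symmX := hX.isSymmSndFDerivAt hn
  have symmY := hY.isSymmSndFDerivAt hn
  ext v
  have hDα : fderiv 𝕜 α x (lieBracket 𝕜 X Y x) v =
      fderiv 𝕜 (fun y => fderiv 𝕜 α y (Y y)) x (X x) v
        - fderiv 𝕜 (fun y => fderiv 𝕜 α y (X y)) x (Y x) v :=
    congr($(fderiv_apply_lieBracket hα hn (hY₂.differentiableAt two_ne_zero)
      (hX₂.differentiableAt two_ne_zero)) v)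
  calc lieDerivOneForm 𝕜 (lieBracket 𝕜 X Y) α x v
      = fderiv 𝕜 α x (lieBracket 𝕜 X Y x) v + α x (fderiv 𝕜 (lieBracket 𝕜 X Y) x v) := rfl
    _ = fderiv 𝕜 (lieDerivOneForm 𝕜 Y α) x (X x) v + lieDerivOneForm 𝕜 Y α x (fderiv 𝕜 X x v)
        - (fderiv 𝕜 (lieDerivOneForm 𝕜 X α) x (Y x) v
          + lieDerivOneForm 𝕜 X α x (fderiv 𝕜 Y x v)) := by
      rw [hDα, fderiv_lieBracket_apply hX₂ hY₂, fderiv_lieDerivOneForm_apply hY₂ hα₂,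
        fderiv_lieDerivOneForm_apply hX₂ hα₂, symmX.eq v, symmY.eq v]
      simp only [lieDerivOneForm, map_add, map_sub, add_apply, ContinuousLinearMap.comp_apply]
      abel
    _ = _ := rfl

end VectorFieldsAndForms

theorem fderiv_apply_eq_partials (f : R3 → ℝ) (p v : R3) :
    fderiv ℝ f p v = v.1 * px f p + v.2.1 * py f p + v.2.2 * pz f p := by
  have hv : v = v.1 • ((1, 0, 0) : R3) + v.2.1 • ((0, 1, 0) : R3) + v.2.2 • ((0, 0, 1) : R3) := by
    ext <;> simp
  conv_lhs => rw [hv]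
  simp only [map_add, map_smul, smul_eq_mul, px, py, pz]

section Smoothness

variable {f : R3 → ℝ} {X : R3 → R3} {m n : ℕ∞ω}

theorem contDiff_px (hf : ContDiff ℝ n f) (hmn : m + 1 ≤ n) : ContDiff ℝ m (px f) :=
  (hf.fderiv_right hmn).clm_apply contDiff_const

theorem contDiff_py (hf : ContDiff ℝ n f) (hmn : m + 1 ≤ n) : ContDiff ℝ m (py f) :=
  (hf.fderiv_right hmn).clm_apply contDiff_const

theorem contDiff_pz (hf : ContDiff ℝ n f) (hmn : m + 1 ≤ n) : ContDiff ℝ m (pz f) :=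
  (hf.fderiv_right hmn).clm_apply contDiff_const

theorem contDiff_Xf (hf : ContDiff ℝ n f) (hmn : m + 1 ≤ n) : ContDiff ℝ m (Xf f) := by
  have hx := contDiff_px hf hmn
  have hy := contDiff_py hf hmn
  have hz := contDiff_pz hf hmn
  have hf' : ContDiff ℝ m f := hf.of_le (le_self_add.trans hmn)
  unfold Xf
  fun_prop

theorem contDiff_omega1 (hX : ContDiff ℝ n X) : ContDiff ℝ n (omega1 X) := by
  unfold omega1
  fun_prop

end Smoothness

/-- The contact form `ω = dy - z dx` as a one-form, so that its Lie derivative along a vector field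
makes sense; `omega1` is only its evaluation on vector fields. -/
def contactForm (p : R3) : R3 →L[ℝ] ℝ :=
  ContinuousLinearMap.fst ℝ ℝ ℝ ∘L ContinuousLinearMap.snd ℝ ℝ (ℝ × ℝ)
    - p.2.2 • ContinuousLinearMap.fst ℝ ℝ (ℝ × ℝ)

theorem contactForm_apply (p v : R3) : contactForm p v = v.2.1 - p.2.2 * v.1 := rfl

theorem contDiff_contactForm {n : ℕ∞ω} : ContDiff ℝ n contactForm := by
  unfold contactForm
  fun_prop

theorem differentiableAt_contactForm {p : R3} : DifferentiableAt ℝ contactForm p :=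
  contDiff_contactForm.differentiable one_ne_zero p

theorem omega1_eq_contactForm (X : R3 → R3) : omega1 X = fun p => contactForm p (X p) := rfl

theorem vbr_eq_lieBracket (X Y : R3 → R3) : vbr X Y = lieBracket ℝ X Y := rfl

theorem contDiff_vbr {X Y : R3 → R3} {m n : ℕ∞ω} (hX : ContDiff ℝ n X) (hY : ContDiff ℝ n Y)
    (hmn : m + 1 ≤ n) : ContDiff ℝ m (vbr X Y) :=
  hX.lieBracket_vectorField hY hmn

theorem isContactVF_iff {X : R3 → R3} :
    IsContactVF X ↔ ContDiff ℝ ∞ X ∧ ∃ lam : R3 → ℝ, ContDiff ℝ ∞ lam ∧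
      ∀ p, lieDerivOneForm ℝ X contactForm p = lam p • contactForm p := by
  have lieDeriv_apply (Y : R3 → R3) (hY : ContDiff ℝ ∞ Y) (p : R3) :
      fderiv ℝ (omega1 Y) p (X p) - omega1 (vbr X Y) p =
        lieDerivOneForm ℝ X contactForm p (Y p) :=
    (lieDerivOneForm_apply_vectorField differentiableAt_contactForm
      (hY.differentiable (by simp) p)).symm
  refine and_congr_right fun _ => exists_congr fun lam => and_congr_right fun _ => ⟨?_, ?_⟩
  · intro h p
    refine ContinuousLinearMap.ext fun v => ?_
    exact (lieDeriv_apply _ contDiff_const p).symm.trans (h (fun _ => v) contDiff_const p)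
  · intro h Y hY p
    exact (lieDeriv_apply Y hY p).trans congr($(h p) (Y p))

theorem fderiv_contactForm_apply (p v w : R3) : fderiv ℝ contactForm p v w = -(v.2.2 * w.1) := by
  have hz := (hasFDerivAt_snd (𝕜 := ℝ) (p := p)).snd
  have hω : HasFDerivAt contactForm _ p :=
    (hz.smul_const (ContinuousLinearMap.fst ℝ ℝ (ℝ × ℝ))).const_sub _
  rw [hω.fderiv]
  simp

/-- Cartan's formula: the second summand is `dω(X, v)`, where `dω = dx ∧ dz`. -/
theorem lieDerivOneForm_contactForm_apply {X : R3 → R3} {p : R3} (hX : DifferentiableAt ℝ X p)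
    (v : R3) :
    lieDerivOneForm ℝ X contactForm p v =
      fderiv ℝ (omega1 X) p v + ((X p).1 * v.2.2 - (X p).2.2 * v.1) := by
  rw [omega1_eq_contactForm, fderiv_clm_apply differentiableAt_contactForm hX]
  simp only [lieDerivOneForm, add_apply, ContinuousLinearMap.comp_apply,
    ContinuousLinearMap.flip_apply, fderiv_contactForm_apply]
  ring

theorem omega1_Xf (f : R3 → ℝ) : omega1 (Xf f) = f := by
  funext p
  simp only [omega1, Xf]
  ring

theorem Xf_injective : Function.Injective Xf :=
  Function.LeftInverse.injective omega1_Xf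

theorem lieDerivOneForm_Xf {f : R3 → ℝ} {p : R3} (hf : DifferentiableAt ℝ (Xf f) p) :
    lieDerivOneForm ℝ (Xf f) contactForm p = py f p • contactForm p := by
  refine ContinuousLinearMap.ext fun v => ?_
  rw [lieDerivOneForm_contactForm_apply hf, omega1_Xf, fderiv_apply_eq_partials]
  simp only [Xf, smul_apply, contactForm_apply, smul_eq_mul]
  ring

theorem Xf_omega1_of_lieDerivOneForm_eq_smul {X : R3 → R3} {p : R3} {c : ℝ}
    (hX : DifferentiableAt ℝ X p)
    (h : lieDerivOneForm ℝ X contactForm p = c • contactForm p) :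
    Xf (omega1 X) p = X p := by
  have cartan (v : R3) : fderiv ℝ (omega1 X) p v + ((X p).1 * v.2.2 - (X p).2.2 * v.1) =
      c * (v.2.1 - p.2.2 * v.1) := by
    rw [← lieDerivOneForm_contactForm_apply hX, h]
    rfl
  have hx : px (omega1 X) p - (X p).2.2 = -(c * p.2.2) := by
    simpa [px, sub_eq_add_neg] using cartan (1, 0, 0)
  have hy : py (omega1 X) p = c := by simpa [py] using cartan (0, 1, 0)
  have hz : pz (omega1 X) p + (X p).1 = 0 := by simpa [pz] using cartan (0, 0, 1)
  refine Prod.ext ?_ (Prod.ext ?_ ?_)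
  · change -pz (omega1 X) p = (X p).1
    linear_combination -hz
  · change (X p).2.1 - p.2.2 * (X p).1 - p.2.2 * pz (omega1 X) p = (X p).2.1
    linear_combination -p.2.2 * hz
  · change px (omega1 X) p + p.2.2 * py (omega1 X) p = (X p).2.2
    linear_combination hx + p.2.2 * hy

theorem IsContactVF.Xf_omega1 {X : R3 → R3} (hX : IsContactVF X) : Xf (omega1 X) = X := by
  obtain ⟨hXs, lam, -, hlam⟩ := isContactVF_iff.1 hX
  exact funext fun p =>
    Xf_omega1_of_lieDerivOneForm_eq_smul (hXs.differentiable (by simp) p) (hlam p)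

theorem isContactVF_Xf {f : R3 → ℝ} (hf : ContDiff ℝ ∞ f) : IsContactVF (Xf f) := by
  have hXf : ContDiff ℝ ∞ (Xf f) := contDiff_Xf hf (by simp)
  exact isContactVF_iff.2 ⟨hXf, py f, contDiff_py hf (by simp),
    fun p => lieDerivOneForm_Xf (hXf.differentiable (by simp) p)⟩

theorem IsContactVF.vbr {X Y : R3 → R3} (hX : IsContactVF X) (hY : IsContactVF Y) :
    IsContactVF (vbr X Y) := by
  obtain ⟨hXs, lam, hlam, hLX⟩ := isContactVF_iff.1 hX
  obtain ⟨hYs, mu, hmu, hLY⟩ := isContactVF_iff.1 hY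
  refine isContactVF_iff.2 ⟨contDiff_vbr hXs hYs (by simp),
    fun p => fderiv ℝ mu p (X p) - fderiv ℝ lam p (Y p), ?_, fun p => ?_⟩
  · exact ((hmu.fderiv_right (by simp)).clm_apply hXs).sub
      ((hlam.fderiv_right (by simp)).clm_apply hYs)
  · rw [vbr_eq_lieBracket, lieDerivOneForm_lieBracket (n := ∞) (by simpa using ENat.LEInfty.out)
        hXs.contDiffAt hYs.contDiffAt contDiff_contactForm.contDiffAt, funext hLX, funext hLY,
      lieDerivOneForm_smul (hmu.differentiable (by simp) p) differentiableAt_contactForm,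
      lieDerivOneForm_smul (hlam.differentiable (by simp) p) differentiableAt_contactForm, hLX, hLY]
    module

section LagrangeBracket

variable {f g h : R3 → ℝ}

theorem lagr_eq_fderiv_sub (f g : R3 → ℝ) (p : R3) :
    lagr f g p = fderiv ℝ g p (Xf f p) - py f p * g p := by
  rw [fderiv_apply_eq_partials]
  simp only [lagr, Xf]
  ring

theorem lagr_skew (f g : R3 → ℝ) (p : R3) : lagr f g p = -lagr g f p := by
  simp only [lagr]
  ring

theorem lagr_linear_right (h : R3 → ℝ) {p : R3} (hf : DifferentiableAt ℝ f p)
    (hg : DifferentiableAt ℝ g p) (a b : ℝ) :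
    lagr h (fun q => a * f q + b * g q) p = a * lagr h f p + b * lagr h g p := by
  simp only [lagr_eq_fderiv_sub]
  rw [fderiv_fun_add (hf.const_mul a) (hg.const_mul b), fderiv_const_mul hf, fderiv_const_mul hg]
  simp only [add_apply, smul_apply, smul_eq_mul]
  ring

theorem lagr_linear_left (h : R3 → ℝ) {p : R3} (hf : DifferentiableAt ℝ f p)
    (hg : DifferentiableAt ℝ g p) (a b : ℝ) :
    lagr (fun q => a * f q + b * g q) h p = a * lagr f h p + b * lagr g h p := by
  rw [lagr_skew, lagr_linear_right h hf hg, lagr_skew f h, lagr_skew g h]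
  ring

theorem omega1_vbr_Xf (hf : ContDiff ℝ 2 f) (hg : ContDiff ℝ 2 g) :
    omega1 (vbr (Xf f) (Xf g)) = lagr f g := by
  funext p
  have hXf := (contDiff_Xf (m := 1) hf le_rfl).differentiable one_ne_zero p
  have hXg := (contDiff_Xf (m := 1) hg le_rfl).differentiable one_ne_zero p
  have hL : py f p * omega1 (Xf g) p =
      fderiv ℝ (omega1 (Xf g)) p (Xf f p) - omega1 (vbr (Xf f) (Xf g)) p :=
    congr($(lieDerivOneForm_Xf hXf) (Xf g p)).symm.trans
      (lieDerivOneForm_apply_vectorField differentiableAt_contactForm hXg)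
  rw [omega1_Xf] at hL
  rw [lagr_eq_fderiv_sub, hL, sub_sub_cancel]

theorem vbr_Xf (hf : ContDiff ℝ ∞ f) (hg : ContDiff ℝ ∞ g) :
    vbr (Xf f) (Xf g) = Xf (lagr f g) := by
  rw [← omega1_vbr_Xf (hf.of_le ENat.LEInfty.out) (hg.of_le ENat.LEInfty.out),
    ((isContactVF_Xf hf).vbr (isContactVF_Xf hg)).Xf_omega1]

theorem contDiff_lagr (hf : ContDiff ℝ ∞ f) (hg : ContDiff ℝ ∞ g) : ContDiff ℝ ∞ (lagr f g) := by
  rw [← omega1_vbr_Xf (hf.of_le ENat.LEInfty.out) (hg.of_le ENat.LEInfty.out)]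
  exact contDiff_omega1 (((isContactVF_Xf hf).vbr (isContactVF_Xf hg)).1)

theorem lagr_jacobi (hf : ContDiff ℝ ∞ f) (hg : ContDiff ℝ ∞ g) (hh : ContDiff ℝ ∞ h) (p : R3) :
    lagr f (lagr g h) p + lagr g (lagr h f) p + lagr h (lagr f g) p = 0 := by
  have lagr_lagr {u v w : R3 → ℝ} (hu : ContDiff ℝ ∞ u) (hv : ContDiff ℝ ∞ v)
      (hw : ContDiff ℝ ∞ w) : lagr u (lagr v w) p =
        contactForm p (lieBracket ℝ (Xf u) (lieBracket ℝ (Xf v) (Xf w)) p) := by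
    rw [← vbr_eq_lieBracket, ← vbr_eq_lieBracket, vbr_Xf hv hw, vbr_Xf hu (contDiff_lagr hv hw)]
    exact congrFun (omega1_Xf _).symm p
  have contDiffAt_Xf {u : R3 → ℝ} (hu : ContDiff ℝ ∞ u) : ContDiffAt ℝ ∞ (Xf u) p :=
    (isContactVF_Xf hu).1.contDiffAt
  rw [lagr_lagr hf hg hh, lagr_lagr hg hh hf, lagr_lagr hh hf hg, ← map_add, ← map_add,
    lieBracket_jacobi (by simpa using ENat.LEInfty.out) (contDiffAt_Xf hf) (contDiffAt_Xf hg)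
      (contDiffAt_Xf hh), map_zero]

end LagrangeBracket

/-- `[X_f, X_g] = X_{{f,g}}` for all smooth `f, g`; consequently the
Lagrange bracket makes `C^∞(ℝ³)` into a Lie algebra (it is bilinear, antisymmetric and
satisfies the Jacobi identity) and `f ↦ X_f` is a Lie algebra isomorphism onto the Lie
algebra of contact vector fields on `ℝ³`. -/
theorem stmt2 :
    (∀ f g : R3 → ℝ, ContDiff ℝ (⊤ : ℕ∞) f → ContDiff ℝ (⊤ : ℕ∞) g →
      ∀ p : R3, vbr (Xf f) (Xf g) p = Xf (lagr f g) p) ∧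
    (∀ f g : R3 → ℝ, ∀ p : R3, lagr f g p = -lagr g f p) ∧
    (∀ f g h : R3 → ℝ, ContDiff ℝ (⊤ : ℕ∞) f → ContDiff ℝ (⊤ : ℕ∞) g →
      ContDiff ℝ (⊤ : ℕ∞) h → ∀ p : R3,
        lagr f (lagr g h) p + lagr g (lagr h f) p + lagr h (lagr f g) p = 0) ∧
    (∀ f g h : R3 → ℝ, ContDiff ℝ (⊤ : ℕ∞) f → ContDiff ℝ (⊤ : ℕ∞) g →
      ContDiff ℝ (⊤ : ℕ∞) h → ∀ a b : ℝ, ∀ p : R3,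
        lagr (fun q => a * f q + b * g q) h p = a * lagr f h p + b * lagr g h p) ∧
    (∀ f : R3 → ℝ, ContDiff ℝ (⊤ : ℕ∞) f → IsContactVF (Xf f)) ∧
    (∀ f g : R3 → ℝ, ContDiff ℝ (⊤ : ℕ∞) f → ContDiff ℝ (⊤ : ℕ∞) g →
      (∀ p : R3, Xf f p = Xf g p) → f = g) ∧
    (∀ X : R3 → R3, IsContactVF X →
      ∃ f : R3 → ℝ, ContDiff ℝ (⊤ : ℕ∞) f ∧ ∀ p : R3, Xf f p = X p) := by
  exact ⟨fun f g hf hg p => congrFun (vbr_Xf hf hg) p, lagr_skew,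
    fun _ _ _ => lagr_jacobi,
    fun f g h hf hg _ a b p => lagr_linear_left h (hf.differentiable (by simp) p)
      (hg.differentiable (by simp) p) a b,
    fun _ => isContactVF_Xf,
    fun f g _ _ hfg => Xf_injective (funext hfg),
    fun X hX => ⟨omega1 X, contDiff_omega1 hX.1, congrFun hX.Xf_omega1⟩⟩
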